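/- Let G be the presented group on eleven generators A, B, C, D, E, F, G, H, I, J, K with the eleven relators: (1) BCB⁻¹C⁻¹, (2) DED⁻¹E⁻¹, (3) DB⁻¹FBA⁻¹D⁻¹AF⁻¹, (4) GA⁻¹EAC⁻¹G⁻¹CE⁻¹, (5) HDB⁻¹H⁻¹BD⁻¹, (6) IEC⁻¹I⁻¹CE⁻¹, (7) JAF⁻¹HFA⁻¹E⁻¹J⁻¹EH⁻¹, (8) JAG⁻¹IGA⁻¹D⁻¹J⁻¹DI⁻¹, (9) HC⁻¹KCF⁻¹H⁻¹FK⁻¹, (10) KG⁻¹IGB⁻¹K⁻¹BI⁻¹, (11) HC⁻¹IB⁻¹CH⁻¹BI⁻¹. Then the abelianization of G is isomorphic to the free abelian group ℤ¹¹. -/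

import Mathlib

/-- The eleven relators of the presentation of the fundamental group of the
permutohedral space, on the eleven generators `A, B, …, K` (indexed by `0, …, 10`). -/
def permRels : Set (FreeGroup (Fin 11)) :=
  let A := FreeGroup.of (0 : Fin 11)
  let B := FreeGroup.of (1 : Fin 11)
  let C := FreeGroup.of (2 : Fin 11)
  let D := FreeGroup.of (3 : Fin 11)
  let E := FreeGroup.of (4 : Fin 11)
  let F := FreeGroup.of (5 : Fin 11)
  let G := FreeGroup.of (6 : Fin 11)
  let H := FreeGroup.of (7 : Fin 11)
  let I := FreeGroup.of (8 : Fin 11)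
  let J := FreeGroup.of (9 : Fin 11)
  let K := FreeGroup.of (10 : Fin 11)
  {B * C * B⁻¹ * C⁻¹,
   D * E * D⁻¹ * E⁻¹,
   D * B⁻¹ * F * B * A⁻¹ * D⁻¹ * A * F⁻¹,
   G * A⁻¹ * E * A * C⁻¹ * G⁻¹ * C * E⁻¹,
   H * D * B⁻¹ * H⁻¹ * B * D⁻¹,
   I * E * C⁻¹ * I⁻¹ * C * E⁻¹,
   J * A * F⁻¹ * H * F * A⁻¹ * E⁻¹ * J⁻¹ * E * H⁻¹,
   J * A * G⁻¹ * I * G * A⁻¹ * D⁻¹ * J⁻¹ * D * I⁻¹,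
   H * C⁻¹ * K * C * F⁻¹ * H⁻¹ * F * K⁻¹,
   K * G⁻¹ * I * G * B⁻¹ * K⁻¹ * B * I⁻¹,
   H * C⁻¹ * I * B⁻¹ * C * H⁻¹ * B * I⁻¹}

/-- If every relator is a product of commutators, the abelianization of a presented group is
the abelianization of the free group on its generators. -/
def PresentedGroup.abelianizationEquivOfSubset {α : Type*} {rels : Set (FreeGroup α)}
    (h : rels ⊆ commutator (FreeGroup α)) :
    Abelianization (PresentedGroup rels) ≃* Abelianization (FreeGroup α) :=
  MonoidHom.toMulEquiv
    (Abelianization.lift <| PresentedGroup.toGroup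
      (f := fun a => Abelianization.of (FreeGroup.of a)) fun r hr => by
        have hlift : FreeGroup.lift (fun a => Abelianization.of (FreeGroup.of a)) =
            (Abelianization.of : FreeGroup α →* _) := by ext; simp
        rw [hlift]
        exact (QuotientGroup.eq_one_iff r).2 (h hr))
    (Abelianization.map (PresentedGroup.mk rels))
    (by
      ext a
      simp only [MonoidHom.comp_apply, Abelianization.lift_apply_of, PresentedGroup.toGroup.of,
        Abelianization.map_of, MonoidHom.id_apply]
      rfl)
    (by
      ext a
      simp only [MonoidHom.comp_apply, Abelianization.map_of, Abelianization.lift_apply_of,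
        MonoidHom.id_apply]
      exact PresentedGroup.toGroup.of _)

/-- The abelianization of a free group on finitely many generators is free abelian. -/
noncomputable def FreeGroup.abelianizationEquivPiInt (α : Type*) [Finite α] :
    Abelianization (FreeGroup α) ≃* Multiplicative (α → ℤ) :=
  AddEquiv.toMultiplicativeRight <| (FreeAbelianGroup.equivFinsupp α).trans
    (Finsupp.linearEquivFunOnFinite ℤ ℤ α).toAddEquiv

theorem permRels_subset_commutator : permRels ⊆ commutator (FreeGroup (Fin 11)) := by
  intro r hr
  refine (QuotientGroup.eq_one_iff r).1 (?_ : Abelianization.of r = 1)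
  simp only [permRels, Set.mem_insert_iff, Set.mem_singleton_iff] at hr
  rcases hr with rfl | rfl | rfl | rfl | rfl | rfl | rfl | rfl | rfl | rfl | rfl <;>
  · simp only [map_mul, map_inv]
    rw [← ofMul_eq_zero]
    simp only [ofMul_mul, ofMul_inv]
    abel

/-- The abelianization of the fundamental group of the permutohedral space is the free
abelian group `ℤ¹¹`. -/
theorem stmt5 :
    Nonempty (Abelianization (PresentedGroup permRels) ≃*
      Multiplicative (Fin 11 → ℤ)) :=
  ⟨(PresentedGroup.abelianizationEquivOfSubset permRels_subset_commutator).trans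
    (FreeGroup.abelianizationEquivPiInt (Fin 11))⟩
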